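/- Let n ≥ 3, set M = n·rad(n), and let R be a set of residue classes r modulo M that are admissible, i.e., for every prime p dividing n the class r is not divisible by p^2 (this condition is well defined since p^2 divides M). Let N_R(X) denote the number of integers a with |a| ≤ X such that a is n-th-power-free and the residue of a modulo M lies in R. Then the limit of N_R(X)/(2X) as X → ∞ exists and equals (#R / M)·ζ(n)^(−1)·∏_{p | n} (1 − p^(−n))^(−1), where the product is over primes p dividing n. -/

import Mathlib

/-!
Möbius inversion over `n`-th powers. For `a ≠ 0`, the sum of `μ(d)` over all `d` with `dⁿ ∣ a` is `1`
or `0` according as `a` is `n`-th-power-free or not (`hasSum_moebius`), so that `N_R(X)` equals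
`∑ μ(d) N(d, X)`, where `N(d, X)` counts the nonzero multiples of `dⁿ` in `[-X, X]` with residue in
`R` (`card_eq_tsum`).

If `d` shares a prime with `n`, admissibility forces `N(d, X) = 0` (`multCount_not_coprime`). If `d`
is prime to `n`, then `dⁿ` is invertible modulo `M = n·rad(n)`, and writing `a = dⁿ b` turns the
condition on `a` into a condition on `b` of the same shape, with as many residue classes; hence
`N(d, X)/(2X) → #R/(M dⁿ)` (`tendsto_multCount_coprime`). Since `N(d, X)/(2X) ≤ d⁻ⁿ` for all `X > 0`
(`multCount_le`), Tannery's theorem allows the limit to be taken term by term. The resulting series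
`∑ μ(d) d⁻ⁿ` over `d` prime to `n` is the inverse of the `L`-series of the trivial character modulo
`n` (`tsum_moebius_coprime`), which is the zeta value with the Euler factors at `p ∣ n` removed.
-/

open Filter

/-- An integer `a` is `n`-th-power-free if no prime `q` satisfies `q^n ∣ a`
(in particular `a ≠ 0` when `n ≥ 1`). -/
def NthPowerFree (n : ℕ) (a : ℤ) : Prop :=
  ∀ q : ℕ, q.Prime → ¬ ((q : ℤ) ^ n ∣ a)

/-- The radical of `n`: the product of the distinct primes dividing `n`. -/
def radical (n : ℕ) : ℕ := ∏ p ∈ n.primeFactors, p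

/-! ### Counting integers in residue classes -/

/-- The integers `a` with `|a| ≤ X`, as a finite set. -/
noncomputable def intBall (X : ℝ) : Finset ℤ := Finset.Icc (-⌊X⌋) ⌊X⌋

lemma mem_intBall {X : ℝ} {a : ℤ} : a ∈ intBall X ↔ |(a : ℝ)| ≤ X := by
  rw [intBall, Finset.mem_Icc, abs_le, neg_le, Int.le_floor, Int.le_floor, Int.cast_neg, neg_le]

/-- The number of nonzero integers `b` with `|b| ≤ X` whose residue modulo `M` lies in `S`. -/
noncomputable def residueCount {M : ℕ} (S : Finset (ZMod M)) (X : ℝ) : ℕ :=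
  ((intBall X).filter fun b : ℤ => b ≠ 0 ∧ (b : ZMod M) ∈ S).card

/-- Discarding `0` is what makes this bound free of an additive constant, and hence usable as a
domination uniformly in `X`. -/
lemma card_filter_le {X : ℝ} (hX : 0 ≤ X) (P : ℤ → Prop) [DecidablePred P]
    (hP : ∀ a, P a → a ≠ 0) : (((intBall X).filter P).card : ℝ) ≤ 2 * X := by
  have hK : 0 ≤ ⌊X⌋ := Int.floor_nonneg.2 hX
  have h1 : ((intBall X).filter P).card ≤ ((intBall X).erase 0).card := by
    refine Finset.card_le_card fun a ha => ?_
    rw [Finset.mem_filter] at ha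
    exact Finset.mem_erase.2 ⟨hP a ha.2, ha.1⟩
  have h2 : ((((intBall X).erase 0).card : ℕ) : ℤ) = 2 * ⌊X⌋ := by
    rw [Finset.card_erase_of_mem (mem_intBall.2 (by simpa using hX)), intBall, Int.card_Icc]
    lia
  calc (((intBall X).filter P).card : ℝ) ≤ (((intBall X).erase 0).card : ℝ) := by
        exact_mod_cast h1
    _ = 2 * (⌊X⌋ : ℝ) := by exact_mod_cast h2
    _ ≤ 2 * X := by linarith [Int.floor_le X]

/-- Only boundedness in `X` matters: rounding at the two ends of the interval costs at most `2`, and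
replacing `2⌊X⌋ + 1` by `2X` at most `1`. -/
lemma abs_card_class_sub_le {M : ℕ} (hM : 0 < M) (r : ZMod M) {X : ℝ} (hX : 0 ≤ X) :
    |(((intBall X).filter fun b : ℤ => (b : ZMod M) = r).card : ℝ) - 2 * X / M| ≤ 4 := by
  have : NeZero M := ⟨hM.ne'⟩
  obtain ⟨v, rfl⟩ := ZMod.intCast_surjective r
  have hK : 0 ≤ ⌊X⌋ := Int.floor_nonneg.2 hX
  have e : ((intBall X).filter fun b : ℤ => (b : ZMod M) = (v : ZMod M)) =
      (Finset.Ioc (-⌊X⌋ - 1) ⌊X⌋).filter fun b : ℤ => b ≡ v [ZMOD (M : ℤ)] := by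
    ext b
    simp only [intBall, Finset.mem_filter, Finset.mem_Icc, Finset.mem_Ioc,
      ZMod.intCast_eq_intCast_iff]
    lia
  have hc := Int.Ioc_filter_modEq_card (-⌊X⌋ - 1) ⌊X⌋ (r := (M : ℤ)) (by exact_mod_cast hM) v
  rw [← e] at hc
  set c := ((intBall X).filter fun b : ℤ => (b : ZMod M) = (v : ZMod M)).card
  set K := ⌊X⌋ with hKdef
  have hMQ : (0 : ℚ) < ((M : ℤ) : ℚ) := by exact_mod_cast hM
  have hmono : ⌊(((-K - 1 : ℤ) : ℚ) - v) / ((M : ℤ) : ℚ)⌋ ≤ ⌊((K : ℚ) - v) / ((M : ℤ) : ℚ)⌋ := by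
    apply Int.floor_mono
    gcongr
    lia
  rw [max_eq_left (by lia)] at hc
  have f1 := Int.floor_le (((K : ℚ) - v) / ((M : ℤ) : ℚ))
  have f2 := Int.lt_floor_add_one (((K : ℚ) - v) / ((M : ℤ) : ℚ))
  have f3 := Int.floor_le ((((-K - 1 : ℤ) : ℚ) - v) / ((M : ℤ) : ℚ))
  have f4 := Int.lt_floor_add_one ((((-K - 1 : ℤ) : ℚ) - v) / ((M : ℤ) : ℚ))
  have hcQ : (c : ℚ) = (⌊((K : ℚ) - v) / ((M : ℤ) : ℚ)⌋ : ℚ) -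
      (⌊(((-K - 1 : ℤ) : ℚ) - v) / ((M : ℤ) : ℚ)⌋ : ℚ) := by exact_mod_cast hc
  have hd : ((K : ℚ) - v) / ((M : ℤ) : ℚ) - (((-K - 1 : ℤ) : ℚ) - v) / ((M : ℤ) : ℚ) =
      (2 * K + 1) / (M : ℚ) := by
    push_cast
    ring
  have u1 : (c : ℚ) ≤ (2 * K + 1) / (M : ℚ) + 1 := by linarith
  have u2 : (2 * K + 1) / (M : ℚ) - 1 ≤ (c : ℚ) := by linarith
  have v1 : (c : ℝ) ≤ (2 * K + 1) / (M : ℝ) + 1 := by exact_mod_cast u1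
  have v2 : (2 * K + 1) / (M : ℝ) - 1 ≤ (c : ℝ) := by exact_mod_cast u2
  have hMR : (1 : ℝ) ≤ M := by exact_mod_cast hM
  have g1 := Int.floor_le X
  have g2 := Int.lt_floor_add_one X
  have w1 : (2 * (K : ℝ) + 1) / M ≤ 2 * X / M + 1 := by
    rw [div_add_one (by positivity)]
    gcongr
  have w2 : 2 * X / M - 1 ≤ (2 * (K : ℝ) + 1) / M := by
    rw [div_sub_one (by positivity)]
    gcongr
    linarith
  rw [abs_le]
  constructor <;> linarith

/-- The bound for one class, summed over `S`; the extra `1` accounts for leaving out `0`. -/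
lemma abs_residueCount_sub_le {M : ℕ} (hM : 0 < M) (S : Finset (ZMod M)) {X : ℝ} (hX : 0 ≤ X) :
    |(residueCount S X : ℝ) - S.card * (2 * X / M)| ≤ 4 * S.card + 1 := by
  set T := (intBall X).filter fun b : ℤ => (b : ZMod M) ∈ S with hT
  have h1 : residueCount S X = (T.erase 0).card := by
    rw [residueCount, hT]
    congr 1
    ext b
    simp only [Finset.mem_filter, Finset.mem_erase]
    tauto
  have h2 : |(residueCount S X : ℝ) - T.card| ≤ 1 := by
    have a1 := Finset.card_erase_le (s := T) (a := 0)
    have a2 := Finset.pred_card_le_card_erase (s := T) (a := 0)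
    rw [h1, abs_le]
    have a3 : T.card ≤ (T.erase 0).card + 1 := by lia
    have b1 : ((T.erase 0).card : ℝ) ≤ T.card := by exact_mod_cast a1
    have b2 : (T.card : ℝ) ≤ (T.erase 0).card + 1 := by exact_mod_cast a3
    constructor <;> linarith
  have h3 : T.card = ∑ r ∈ S, ((intBall X).filter fun b : ℤ => (b : ZMod M) = r).card := by
    rw [Finset.card_eq_sum_card_fiberwise (s := T) (f := fun b : ℤ => (b : ZMod M)) (t := S)
      (fun b hb => (Finset.mem_filter.1 hb).2)]
    refine Finset.sum_congr rfl fun r hr => ?_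
    congr 1
    ext b
    simp only [hT, Finset.mem_filter]
    constructor
    · tauto
    · rintro ⟨h, rfl⟩
      exact ⟨⟨h, hr⟩, rfl⟩
  have h4 : |(T.card : ℝ) - S.card * (2 * X / M)| ≤ 4 * S.card := by
    have : (T.card : ℝ) - S.card * (2 * X / M) =
        ∑ r ∈ S, ((((intBall X).filter fun b : ℤ => (b : ZMod M) = r).card : ℝ) - 2 * X / M) := by
      rw [h3, Finset.sum_sub_distrib, Finset.sum_const, nsmul_eq_mul]
      push_cast
      rfl
    rw [this]
    refine (Finset.abs_sum_le_sum_abs _ _).trans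
      ((Finset.sum_le_sum fun r _ => abs_card_class_sub_le hM r hX).trans ?_)
    rw [Finset.sum_const, nsmul_eq_mul, mul_comm]
  have := abs_sub_le (residueCount S X : ℝ) T.card (S.card * (2 * X / M))
  linarith

lemma tendsto_residueCount {M : ℕ} (hM : 0 < M) (S : Finset (ZMod M)) :
    Tendsto (fun X : ℝ => (residueCount S X : ℝ) / (2 * X)) atTop (nhds (S.card / M : ℝ)) := by
  have hMR : (0 : ℝ) < M := by exact_mod_cast hM
  rw [tendsto_iff_norm_sub_tendsto_zero]
  have hlim : Tendsto (fun X : ℝ => (4 * S.card + 1 : ℝ) / (2 * X)) atTop (nhds 0) :=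
    tendsto_const_nhds.div_atTop (tendsto_id.const_mul_atTop (by norm_num))
  refine squeeze_zero' (Eventually.of_forall fun _ => norm_nonneg _) ?_ hlim
  filter_upwards [eventually_gt_atTop 0] with X hX
  have e : (residueCount S X : ℝ) / (2 * X) - S.card / M =
      ((residueCount S X : ℝ) - S.card * (2 * X / M)) / (2 * X) := by
    field_simp
  rw [e, Real.norm_eq_abs, abs_div, abs_of_pos (by positivity : (0 : ℝ) < 2 * X)]
  gcongr
  exact abs_residueCount_sub_le hM S hX.le

/-- The multiples `a = k * b` of a modulus `k` invertible modulo `M`: the condition on the residue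
of `a` becomes the condition that the residue of `b` lies in the translate `k⁻¹ R`. -/
lemma card_multiples {M : ℕ} (R : Finset (ZMod M)) {k : ℕ} (hk : 0 < k) (u : (ZMod M)ˣ)
    (hu : (u : ZMod M) = (k : ZMod M)) (X : ℝ) :
    ((intBall X).filter fun a : ℤ => a ≠ 0 ∧ (a : ZMod M) ∈ R ∧ (k : ℤ) ∣ a).card =
      residueCount (R.image fun r => ((u⁻¹ : (ZMod M)ˣ) : ZMod M) * r) (X / k) := by
  have hkR : (0 : ℝ) < k := by exact_mod_cast hk
  symm
  refine Finset.card_bij (fun b _ => (k : ℤ) * b) ?_ ?_ ?_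
  · intro b hb
    simp only [Finset.mem_filter, mem_intBall, Finset.mem_image] at hb ⊢
    obtain ⟨h1, h2, r, hr, h3⟩ := hb
    refine ⟨?_, mul_ne_zero (by exact_mod_cast hk.ne') h2, ?_, dvd_mul_right _ _⟩
    · push_cast
      rw [abs_mul, abs_of_pos hkR, mul_comm]
      exact (le_div_iff₀ hkR).1 h1
    · push_cast
      rw [← h3, ← hu, Units.mul_inv_cancel_left]
      exact hr
  · intro b _ c _ h
    exact mul_left_cancel₀ (by exact_mod_cast hk.ne') h
  · intro a ha
    simp only [Finset.mem_filter, mem_intBall] at ha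
    obtain ⟨h1, h2, h3, b, rfl⟩ := ha
    refine ⟨b, ?_, rfl⟩
    simp only [Finset.mem_filter, mem_intBall, Finset.mem_image]
    push_cast at h1 h3
    refine ⟨?_, right_ne_zero_of_mul h2, _, h3, ?_⟩
    · rw [abs_mul, abs_of_pos hkR, mul_comm] at h1
      exact (le_div_iff₀ hkR).2 h1
    · rw [← hu, Units.inv_mul_cancel_left]

/-! ### Möbius inversion over `n`-th powers -/

open ArithmeticFunction in
lemma sum_divisors_moebius {m : ℕ} :
    ∑ d ∈ m.divisors, moebius d = if m = 1 then 1 else 0 := by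
  rw [← coe_mul_zeta_apply, moebius_mul_coe_zeta, one_apply]

lemma nthPowerFree_iff {n : ℕ} {a : ℤ} :
    NthPowerFree n a ↔ Nat.floorRoot n a.natAbs = 1 := by
  have key : ∀ q : ℕ, (q : ℤ) ^ n ∣ a ↔ q ∣ Nat.floorRoot n a.natAbs := fun q => by
    rw [← Nat.pow_dvd_iff_dvd_floorRoot, ← Int.natCast_dvd, Nat.cast_pow]
  simp only [NthPowerFree, key]
  exact ⟨fun h => by_contra fun h1 => by
    obtain ⟨p, hp, hpd⟩ := Nat.exists_prime_and_dvd h1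
    exact h p hp hpd, fun h q hq hd => hq.one_lt.ne' (Nat.dvd_one.1 (h ▸ hd))⟩

open ArithmeticFunction in
/-- The `d` with `d ^ n ∣ a` are exactly the divisors of the largest one, `Nat.floorRoot n |a|`,
which is `1` precisely when `a` is `n`-th-power-free. -/
lemma hasSum_moebius {n : ℕ} (hn : n ≠ 0) {a : ℤ} (ha : a ≠ 0) [Decidable (NthPowerFree n a)] :
    HasSum (fun d : ℕ => if (d : ℤ) ^ n ∣ a then (moebius d : ℂ) else 0)
      (if NthPowerFree n a then 1 else 0) := by
  set m := Nat.floorRoot n a.natAbs with hm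
  have hm0 : m ≠ 0 := Nat.floorRoot_ne_zero.2 ⟨hn, Int.natAbs_ne_zero.2 ha⟩
  have key : ∀ q : ℕ, (q : ℤ) ^ n ∣ a ↔ q ∈ m.divisors := fun q => by
    rw [Nat.mem_divisors, and_iff_left hm0, hm, ← Nat.pow_dvd_iff_dvd_floorRoot,
      ← Int.natCast_dvd, Nat.cast_pow]
  have hs := hasSum_sum_of_ne_finset_zero (L := .unconditional ℕ) (s := m.divisors)
    (f := fun d : ℕ => if (d : ℤ) ^ n ∣ a then (moebius d : ℂ) else 0)
    (fun d hd => if_neg fun h => hd ((key d).1 h))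
  convert hs using 1
  rw [Finset.sum_congr rfl fun d hd => if_pos ((key d).2 hd)]
  have h := congrArg (Int.cast : ℤ → ℂ) (sum_divisors_moebius (m := m))
  push_cast at h
  rw [h]
  simp only [nthPowerFree_iff, hm]

open ArithmeticFunction in
/-- The value of `∑ μ(d) d⁻ⁿ` over `d` prime to `n`, as the inverse of the `L`-series of the trivial
character modulo `n`. -/
lemma tsum_moebius_coprime {n : ℕ} (hn : 3 ≤ n) :
    ∑' d : ℕ, (if d.Coprime n then (moebius d : ℂ) / (d : ℂ) ^ n else 0) =
      (riemannZeta n)⁻¹ * ∏ p ∈ n.primeFactors, (1 - (p : ℂ) ^ (-(n : ℤ)))⁻¹ := by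
  have : NeZero n := ⟨by lia⟩
  have hs : 1 < (n : ℂ).re := by
    rw [Complex.natCast_re]
    exact_mod_cast (by lia : 1 < n)
  have h1 := DirichletCharacter.LSeries.mul_mu_eq_one (1 : DirichletCharacter ℂ n) hs
  rw [← DirichletCharacter.LFunction_eq_LSeries _ hs] at h1
  have h2 := DirichletCharacter.LFunctionTrivChar_eq_mul_riemannZeta (N := n) (s := (n : ℂ))
    (by exact_mod_cast (by lia : n ≠ 1))
  rw [DirichletCharacter.LFunctionTrivChar] at h2
  rw [h2] at h1
  have h3 : LSeries (fun d : ℕ => (1 : DirichletCharacter ℂ n) d * (moebius d : ℂ)) n =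
      ∑' d : ℕ, (if d.Coprime n then (moebius d : ℂ) / (d : ℂ) ^ n else 0) := by
    rw [LSeries]
    refine tsum_congr fun d => ?_
    rw [LSeries.term_def]
    rcases eq_or_ne d 0 with rfl | hd
    · simp
    · rw [if_neg hd, Complex.cpow_natCast]
      split_ifs with hc
      · rw [MulChar.one_apply ((ZMod.isUnit_iff_coprime d n).2 hc), one_mul]
      · rw [MulChar.map_nonunit _ (mt (ZMod.isUnit_iff_coprime d n).1 hc), zero_mul, zero_div]
  rw [← h3]
  have h4 : ∀ p : ℕ, (p : ℂ) ^ (-(n : ℂ)) = (p : ℂ) ^ (-(n : ℤ)) := fun p => by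
    rw [← Complex.cpow_intCast]
    push_cast
    rfl
  simp only [h4] at h1
  rw [Finset.prod_inv_distrib, ← mul_inv, mul_comm (riemannZeta n)]
  exact eq_inv_of_mul_eq_one_right h1

/-! ### Multiples of `dⁿ` -/

lemma prime_dvd_mul_radical {n p : ℕ} (hp : p.Prime) : p ∣ n * radical n ↔ p ∣ n := by
  refine ⟨fun h => ?_, fun h => dvd_mul_of_dvd_left h _⟩
  rcases hp.dvd_mul.1 h with h | h
  · exact h
  · exact h.trans (Nat.prod_primeFactors_dvd n)

/-- The number of nonzero multiples `a` of `d ^ n` with `|a| ≤ X` and residue in `R`. -/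
noncomputable def multCount {M : ℕ} (n : ℕ) (R : Finset (ZMod M)) (d : ℕ) (X : ℝ) : ℕ :=
  ((intBall X).filter fun a : ℤ => a ≠ 0 ∧ (a : ZMod M) ∈ R ∧ (d : ℤ) ^ n ∣ a).card

/-- The bound `(2X)/dⁿ` is uniform in the modulus and in `R`: multiples of `dⁿ` in `[-X, X]`
correspond to integers in `[-X/dⁿ, X/dⁿ]`. -/
lemma multCount_le {M : ℕ} (n : ℕ) (R : Finset (ZMod M)) {d : ℕ} (hd : 0 < d) {X : ℝ}
    (hX : 0 ≤ X) : (multCount n R d X : ℝ) ≤ 2 * (X / (d : ℝ) ^ n) := by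
  have h1 : multCount n R d X ≤
      ((intBall X).filter fun a : ℤ => a ≠ 0 ∧ (a : ZMod 1) ∈ (Finset.univ : Finset (ZMod 1)) ∧
        ((d ^ n : ℕ) : ℤ) ∣ a).card := by
    refine Finset.card_le_card fun a ha => ?_
    simp only [Finset.mem_filter] at ha ⊢
    exact ⟨ha.1, ha.2.1, Finset.mem_univ _, by exact_mod_cast ha.2.2.2⟩
  -- Modulo `1` every `d ^ n` is invertible, so the substitution `a = d ^ n * b` applies.
  rw [card_multiples Finset.univ (by positivity) 1 (Subsingleton.elim _ _)] at h1
  have h2 := card_filter_le (X := X / ((d ^ n : ℕ) : ℝ)) (by positivity)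
    (fun b : ℤ => b ≠ 0 ∧ (b : ZMod 1) ∈
      (Finset.univ : Finset (ZMod 1)).image fun r => ((1⁻¹ : (ZMod 1)ˣ) : ZMod 1) * r)
    (fun _ h => h.1)
  rw [residueCount] at h1
  push_cast at h2
  exact le_trans (by exact_mod_cast h1) h2

lemma tendsto_multCount_coprime {M : ℕ} (hM : 0 < M) (n : ℕ) (R : Finset (ZMod M)) {d : ℕ}
    (hd : 0 < d) (hdM : d.Coprime M) :
    Tendsto (fun X : ℝ => (multCount n R d X : ℝ) / (2 * X)) atTop
      (nhds ((R.card : ℝ) / M / (d : ℝ) ^ n)) := by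
  have hk : (0 : ℝ) < (d : ℝ) ^ n := by positivity
  have hu := ZMod.coe_unitOfCoprime (d ^ n) (Nat.Coprime.pow_left n hdM)
  set u := ZMod.unitOfCoprime (d ^ n) (Nat.Coprime.pow_left n hdM)
  have hcard : (R.image fun r => ((u⁻¹ : (ZMod M)ˣ) : ZMod M) * r).card = R.card :=
    Finset.card_image_of_injective _ (Units.isUnit u⁻¹).mul_right_injective
  have h := (tendsto_residueCount hM (R.image fun r => ((u⁻¹ : (ZMod M)ˣ) : ZMod M) * r)).comp
    (tendsto_id.atTop_div_const hk)
  rw [hcard] at h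
  refine (h.div_const ((d : ℝ) ^ n)).congr fun X => ?_
  have e := card_multiples R (k := d ^ n) (by positivity) u hu X
  push_cast at e
  simp only [multCount, e, Function.comp_apply, id]
  rw [div_div, mul_assoc, div_mul_cancel₀ _ hk.ne']

/-- Admissibility at work: a common prime `p` of `d` and `n` gives `p² ∣ dⁿ ∣ a`. -/
lemma multCount_not_coprime {n : ℕ} (hn : 3 ≤ n) {R : Finset (ZMod (n * radical n))}
    (hadm : ∀ r ∈ R, ∀ p : ℕ, p.Prime → p ∣ n →
      ∀ b : ℤ, (b : ZMod (n * radical n)) = r → ¬ ((p : ℤ) ^ 2 ∣ b))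
    {d : ℕ} (hd : ¬ d.Coprime n) (X : ℝ) : multCount n R d X = 0 := by
  rw [multCount, Finset.card_eq_zero, Finset.filter_eq_empty_iff]
  rintro a - ⟨-, haR, hda⟩
  obtain ⟨p, hp, hpd, hpn⟩ := Nat.Prime.not_coprime_iff_dvd.1 hd
  refine hadm _ haR p hp hpn a rfl (dvd_trans ?_ hda)
  exact (pow_dvd_pow _ (by lia)).trans (pow_dvd_pow_of_dvd (by exact_mod_cast hpd) n)

open ArithmeticFunction in
/-- `N_R(X)` as a Möbius sum; for each `X` only finitely many terms are nonzero. -/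
lemma card_eq_tsum {n : ℕ} (hn : 3 ≤ n) {M : ℕ} (R : Finset (ZMod M)) (X : ℝ) :
    (Nat.card {a : ℤ | |(a : ℝ)| ≤ X ∧ NthPowerFree n a ∧ (a : ZMod M) ∈ R} : ℂ) =
      ∑' d : ℕ, (moebius d : ℂ) * multCount n R d X := by
  classical
  have hn0 : n ≠ 0 := by lia
  set A := (intBall X).filter fun a : ℤ => a ≠ 0 ∧ (a : ZMod M) ∈ R with hA
  have hset : {a : ℤ | |(a : ℝ)| ≤ X ∧ NthPowerFree n a ∧ (a : ZMod M) ∈ R} =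
      ((A.filter fun a => NthPowerFree n a : Finset ℤ) : Set ℤ) := by
    ext a
    simp only [hA, Finset.coe_filter, Finset.mem_filter, mem_intBall, Set.mem_ofPred_eq]
    have h0 : NthPowerFree n a → a ≠ 0 := by
      rintro h rfl
      exact h 2 Nat.prime_two (dvd_zero _)
    tauto
  have hcard : (Nat.card {a : ℤ | |(a : ℝ)| ≤ X ∧ NthPowerFree n a ∧ (a : ZMod M) ∈ R} : ℂ) =
      ∑ a ∈ A, if NthPowerFree n a then (1 : ℂ) else 0 := by
    rw [hset, Nat.card_coe_set_eq, Set.ncard_coe_finset, Finset.sum_boole]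
  have hsum : HasSum (fun d : ℕ => ∑ a ∈ A, if (d : ℤ) ^ n ∣ a then (moebius d : ℂ) else 0)
      (∑ a ∈ A, if NthPowerFree n a then (1 : ℂ) else 0) :=
    hasSum_sum fun a ha => hasSum_moebius hn0 (Finset.mem_filter.1 ha).2.1
  rw [hcard, ← hsum.tsum_eq]
  refine tsum_congr fun d => ?_
  rw [← Finset.sum_filter, Finset.sum_const, nsmul_eq_mul, mul_comm, multCount, hA,
    Finset.filter_filter]
  simp only [and_assoc]

/-! ### The density -/

/-- Let `n ≥ 3`, set `M = n·rad(n)`, and let `R` be a set of residue classes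
`r` modulo `M` that are admissible, i.e. for every prime `p` dividing `n` the class `r` is
not divisible by `p^2` (well defined since `p^2 ∣ M`). Let `N_R(X)` denote the number of
integers `a` with `|a| ≤ X` such that `a` is `n`-th-power-free and the residue of `a`
modulo `M` lies in `R`. Then `N_R(X)/(2X)` converges as `X → ∞` to
`(#R / M)·ζ(n)⁻¹·∏_{p ∣ n} (1 − p^(−n))⁻¹`, the product being over primes `p` dividing
`n`. -/
theorem density_of_shape_classes (n : ℕ) (hn : 3 ≤ n)
    (R : Finset (ZMod (n * radical n)))
    (hadm : ∀ r ∈ R, ∀ p : ℕ, p.Prime → p ∣ n →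
      ∀ b : ℤ, (b : ZMod (n * radical n)) = r → ¬ ((p : ℤ) ^ 2 ∣ b)) :
    Tendsto
      (fun X : ℝ =>
        ((Nat.card {a : ℤ | |(a : ℝ)| ≤ X ∧ NthPowerFree n a ∧
            (a : ZMod (n * radical n)) ∈ R} : ℝ) / (2 * X) : ℂ))
      atTop
      (nhds ((R.card : ℂ) / (n * radical n : ℕ) * (riemannZeta n)⁻¹ *
        ∏ p ∈ n.primeFactors, (1 - (p : ℂ) ^ (-(n : ℤ)))⁻¹)) := by
  have hM : 0 < n * radical n :=
    Nat.mul_pos (by lia) (Finset.prod_pos fun p hp => (Nat.prime_of_mem_primeFactors hp).pos)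
  let M := n * radical n
  set g : ℕ → ℂ := fun d => (R.card : ℂ) / M *
    if d.Coprime n then (ArithmeticFunction.moebius d : ℂ) / (d : ℂ) ^ n else 0 with hg
  have hlim : ∑' d, g d = (R.card : ℂ) / M * (riemannZeta n)⁻¹ *
        ∏ p ∈ n.primeFactors, (1 - (p : ℂ) ^ (-(n : ℤ)))⁻¹ := by
    rw [hg, tsum_mul_left, tsum_moebius_coprime hn, mul_assoc]
  rw [← hlim]
  have hT : Tendsto (fun X : ℝ => ∑' d : ℕ, (ArithmeticFunction.moebius d : ℂ) *
      (((multCount n R d X : ℝ) / (2 * X) : ℝ) : ℂ)) atTop (nhds (∑' d, g d)) := by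
    refine tendsto_tsum_of_dominated_convergence
      (Real.summable_one_div_nat_pow.2 (by lia : 1 < n)) ?_ ?_
    · intro d
      rcases Nat.eq_zero_or_pos d with rfl | hd
      · simp [hg]
      by_cases hc : d.Coprime n
      · have hcM : d.Coprime M :=
          Nat.coprime_of_dvd fun p hp hpd hpM =>
            hp.one_lt.ne' (Nat.dvd_one.1 (hc ▸ Nat.dvd_gcd hpd
              ((prime_dvd_mul_radical hp).1 hpM)))
        have h := ((Complex.continuous_ofReal.tendsto _).comp
          (tendsto_multCount_coprime hM n R hd hcM)).const_mul
            (ArithmeticFunction.moebius d : ℂ)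
        have e : g d = (ArithmeticFunction.moebius d : ℂ) *
            (((R.card : ℝ) / M / (d : ℝ) ^ n : ℝ) : ℂ) := by
          simp only [hg, if_pos hc]
          push_cast
          ring
        rw [e]
        exact h
      · have h0 : ∀ X, multCount n R d X = 0 := multCount_not_coprime hn hadm hc
        simp [hg, if_neg hc, h0]
    · filter_upwards [eventually_gt_atTop 0] with X hX d
      rcases Nat.eq_zero_or_pos d with rfl | hd
      · simp [show n ≠ 0 by lia]
      have h1 : ‖(ArithmeticFunction.moebius d : ℂ)‖ ≤ 1 := by
        rw [Complex.norm_intCast]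
        exact_mod_cast ArithmeticFunction.abs_moebius_le_one
      have h2 : ‖(((multCount n R d X : ℝ) / (2 * X) : ℝ) : ℂ)‖ ≤ 1 / (d : ℝ) ^ n := by
        rw [Complex.norm_real, Real.norm_of_nonneg (by positivity),
          div_le_iff₀ (by positivity)]
        refine (multCount_le n R hd hX.le).trans_eq ?_
        ring
      rw [norm_mul]
      exact (mul_le_mul h1 h2 (norm_nonneg _) zero_le_one).trans_eq (one_mul _)
  refine hT.congr fun X => ?_
  rw [Complex.ofReal_natCast, card_eq_tsum hn R X, ← tsum_div_const]
  refine tsum_congr fun d => ?_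
  push_cast
  ring
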